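/- Let K be any field, R = K[x,y,z], and I = (x^k, y^k, z^k, x^α y^α z^α) with α odd, k odd, and k ≥ 2α + 1. Then R/I is a level Artinian algebra and it fails to have the WLP. -/

import Mathlib

open MvPolynomial

noncomputable def component (r : ℕ) (K : Type*) [Field K]
    (I : Ideal (MvPolynomial (Fin r) K)) (d : ℕ) :
    Submodule K (MvPolynomial (Fin r) K ⧸ I) :=
  (MvPolynomial.homogeneousSubmodule (Fin r) K d).map
    (Ideal.Quotient.mkₐ K I).toLinearMap

noncomputable def hilb (r : ℕ) (K : Type*) [Field K]
    (I : Ideal (MvPolynomial (Fin r) K)) (d : ℕ) : ℕ :=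
  Module.finrank K (component r K I d)

/-- Injectivity of the multiplication map `×L : (R/I)_d → (R/I)_{d+1}`. -/
def mulMapInj (r : ℕ) (K : Type*) [Field K]
    (I : Ideal (MvPolynomial (Fin r) K)) (L : MvPolynomial (Fin r) K) (d : ℕ) : Prop :=
  ∀ a ∈ component r K I d, Ideal.Quotient.mk I L * a = 0 → a = 0

/-- Surjectivity of the multiplication map `×L : (R/I)_d → (R/I)_{d+1}`. -/
def mulMapSurj (r : ℕ) (K : Type*) [Field K]
    (I : Ideal (MvPolynomial (Fin r) K)) (L : MvPolynomial (Fin r) K) (d : ℕ) : Prop :=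
  ∀ b ∈ component r K I (d + 1), ∃ a ∈ component r K I d, Ideal.Quotient.mk I L * a = b

/-- `L` is a Lefschetz element: a linear form for which every multiplication map
`×L : (R/I)_d → (R/I)_{d+1}` has maximal rank (is injective or surjective). -/
def isLefschetzElem (r : ℕ) (K : Type*) [Field K]
    (I : Ideal (MvPolynomial (Fin r) K)) (L : MvPolynomial (Fin r) K) : Prop :=
  L ∈ MvPolynomial.homogeneousSubmodule (Fin r) K 1 ∧
    ∀ d : ℕ, mulMapInj r K I L d ∨ mulMapSurj r K I L d

/-- The Weak Lefschetz Property. -/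
def hasWLP (r : ℕ) (K : Type*) [Field K] (I : Ideal (MvPolynomial (Fin r) K)) : Prop :=
  ∃ L, isLefschetzElem r K I L

/-- The socle of `R/I`: the annihilator of the maximal graded ideal. -/
def socle (r : ℕ) (K : Type*) [Field K] (I : Ideal (MvPolynomial (Fin r) K)) :
    Submodule K (MvPolynomial (Fin r) K ⧸ I) where
  carrier := {a | ∀ i : Fin r, Ideal.Quotient.mk I (X i) * a = 0}
  add_mem' := by
    intro a b ha hb i
    rw [mul_add, ha i, hb i, add_zero]
  zero_mem' := by
    intro i
    rw [mul_zero]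
  smul_mem' := by
    intro c a ha i
    rw [mul_smul_comm, ha i, smul_zero]


def stS (α k e : ℕ) : Finset (ℕ × ℕ × ℕ) :=
  (Finset.range k ×ˢ Finset.range k ×ˢ Finset.range k).filter
    (fun p => p.1 + p.2.1 + p.2.2 = e ∧ (p.1 < α ∨ p.2.1 < α ∨ p.2.2 < α))

theorem mem_stS {α k e i j l : ℕ} : (i, j, l) ∈ stS α k e ↔
    i < k ∧ j < k ∧ l < k ∧ i + j + l = e ∧ (i < α ∨ j < α ∨ l < α) := by
  simp [stS, and_assoc]

/-- The explicit bijection between monomials of degree `k + α - 2` and `k + α - 1`. -/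
def stF (α k : ℕ) (p : ℕ × ℕ × ℕ) : ℕ × ℕ × ℕ :=
  let i := p.1
  let j := p.2.1
  let l := p.2.2
  if i < α ∧ j < α then
    (if α ≤ i + j then (i, j, l + 1) else (i, α, k - 1 - i))
  else if j < α ∧ l < α then
    (if α ≤ j + l then (i + 1, j, l) else (k - 1 - j, j, α))
  else if l < α ∧ i < α then
    (if α ≤ l + i then (i, j + 1, l) else (α, k - 1 - l, l))
  else if i < α then (i, j + 1, l)
  else if j < α then (i, j, l + 1)
  else (i + 1, j, l)

def stG (α k : ℕ) (p : ℕ × ℕ × ℕ) : ℕ × ℕ × ℕ :=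
  let i := p.1
  let j := p.2.1
  let l := p.2.2
  if i < α ∧ j < α then (i, j, l - 1)
  else if j < α ∧ l < α then (i - 1, j, l)
  else if l < α ∧ i < α then (i, j - 1, l)
  else if i < α then (if j = α then (i, α - 1 - i, k - 1) else (i, j - 1, l))
  else if j < α then (if l = α then (k - 1, j, α - 1 - j) else (i, j, l - 1))
  else (if i = α then (α - 1 - l, k - 1, l) else (i - 1, j, l))

theorem card_stS (α k : ℕ) (h0 : 0 < α) (hk : 2 * α + 1 ≤ k) :
    (stS α k (k + α - 2)).card = (stS α k (k + α - 1)).card := by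
  refine Finset.card_nbij' (stF α k) (stG α k) ?_ ?_ ?_ ?_
  · rintro ⟨i, j, l⟩ h
    simp only [Finset.mem_coe, mem_stS] at h
    simp only [stF, Finset.mem_coe]
    split_ifs <;> rw [mem_stS] <;> omega
  · rintro ⟨i, j, l⟩ h
    simp only [Finset.mem_coe, mem_stS] at h
    simp only [stG, Finset.mem_coe]
    split_ifs <;> rw [mem_stS] <;> omega
  · rintro ⟨i, j, l⟩ h
    simp only [Finset.mem_coe, mem_stS] at h
    simp only [stF]
    split_ifs <;> simp only [stG] <;> split_ifs <;> simp only [Prod.mk.injEq, true_and, and_true] <;> omega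
  · rintro ⟨i, j, l⟩ h
    simp only [Finset.mem_coe, mem_stS] at h
    simp only [stG]
    split_ifs <;> simp only [stF] <;> split_ifs <;> simp only [Prod.mk.injEq, true_and, and_true] <;> omega

def stSwap (α k e : ℕ) : Equiv.Perm (stS α k e) where
  toFun p := ⟨(p.1.2.1, p.1.1, p.1.2.2), by
    obtain ⟨⟨i, j, l⟩, h⟩ := p
    rw [mem_stS] at h; exact mem_stS.2 (by dsimp only; omega)⟩
  invFun p := ⟨(p.1.2.1, p.1.1, p.1.2.2), by
    obtain ⟨⟨i, j, l⟩, h⟩ := p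
    rw [mem_stS] at h; exact mem_stS.2 (by dsimp only; omega)⟩
  left_inv p := rfl
  right_inv p := rfl

def stFix (α k e : ℕ) : Finset (ℕ × ℕ × ℕ) := (stS α k e).filter (fun p => p.1 = p.2.1)

theorem sign_invol {ι : Type*} [Fintype ι] [DecidableEq ι] (σ : Equiv.Perm ι) (h : σ * σ = 1) :
    2 ∣ σ.support.card ∧ Equiv.Perm.sign σ = (-1) ^ (σ.support.card / 2) := by
  have h2 : σ.cycleType = Multiset.replicate σ.cycleType.card 2 := by
    rw [Multiset.eq_replicate]
    refine ⟨rfl, fun b hb => ?_⟩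
    have h3 := Equiv.Perm.dvd_of_mem_cycleType hb
    have h4 := Equiv.Perm.two_le_of_mem_cycleType hb
    have h5 : orderOf σ ∣ 2 := orderOf_dvd_of_pow_eq_one (by rw [pow_two, h])
    have := Nat.le_of_dvd (by norm_num) (h3.trans h5)
    omega
  have h6 := Equiv.Perm.sum_cycleType σ
  rw [h2, Multiset.sum_replicate, smul_eq_mul] at h6
  refine ⟨⟨_, by rw [← h6, mul_comm]⟩, ?_⟩
  rw [Equiv.Perm.sign_of_cycleType, ← h6, h2]
  simp [pow_add, pow_mul]

theorem support_stSwap (α k e : ℕ) :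
    (stSwap α k e).support.card + (stFix α k e).card = (stS α k e).card := by
  have h1 : (stSwap α k e).support.card = ((stS α k e).filter (fun p => ¬ p.1 = p.2.1)).card := by
    refine Finset.card_bij (fun p _ => p.1) ?_ ?_ ?_
    · rintro ⟨⟨i, j, l⟩, h⟩ h'
      simp [stSwap, Subtype.ext_iff] at h'
      simp only [Finset.mem_filter]
      refine ⟨h, ?_⟩
      intro h2
      exact h' h2.symm h2
    · intro a _ b _ h
      exact Subtype.ext h
    · rintro ⟨i, j, l⟩ h
      simp only [Finset.mem_filter] at h
      refine ⟨⟨_, h.1⟩, ?_, rfl⟩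
      simp [stSwap, Subtype.ext_iff]
      intro h'; exact absurd h'.symm h.2
  rw [h1, stFix, add_comm, Finset.card_filter_add_card_filter_not]

theorem card_stFix (a b : ℕ) (hk : 2 * a + 1 ≤ b) :
    (stFix (2*a+1) (2*b+1) (2*b+1+(2*a+1)-2)).card =
      (stFix (2*a+1) (2*b+1) (2*b+1+(2*a+1)-1)).card + 2 := by
  have h1 : (stFix (2*a+1) (2*b+1) (2*b+1+(2*a+1)-2)) =
      (Finset.Icc a (2*a) ∪ Finset.Icc b (a+b)).image (fun i => (i, i, 2*a+2*b-2*i)) := by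
    ext ⟨i, j, l⟩
    simp only [stFix, Finset.mem_filter, mem_stS, Finset.mem_image, Finset.mem_union,
      Finset.mem_Icc, Prod.mk.injEq]
    constructor
    · intro h
      exact ⟨i, by omega⟩
    · rintro ⟨x, h⟩; omega
  have h2 : (stFix (2*a+1) (2*b+1) (2*b+1+(2*a+1)-1)) =
      (Finset.Icc (a+1) (2*a) ∪ Finset.Icc (b+1) (a+b)).image
        (fun i => (i, i, 2*a+2*b+1-2*i)) := by
    ext ⟨i, j, l⟩
    simp only [stFix, Finset.mem_filter, mem_stS, Finset.mem_image, Finset.mem_union,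
      Finset.mem_Icc, Prod.mk.injEq]
    constructor
    · intro h
      exact ⟨i, by omega⟩
    · rintro ⟨x, h⟩; omega
  rw [h1, h2, Finset.card_image_of_injective, Finset.card_image_of_injective,
    Finset.card_union_of_disjoint, Finset.card_union_of_disjoint]
  · simp only [Nat.card_Icc]; omega
  · rw [Finset.disjoint_left]; intro x; simp only [Finset.mem_Icc]; omega
  · rw [Finset.disjoint_left]; intro x; simp only [Finset.mem_Icc]; omega
  · intro x y h; exact (Prod.mk.inj h).1
  · intro x y h; exact (Prod.mk.inj h).1

theorem sign_stSwap (α k : ℕ) (hα : Odd α) (hk : Odd k) (hkα : 2 * α + 1 ≤ k) :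
    Equiv.Perm.sign (stSwap α k (k + α - 1)) = - Equiv.Perm.sign (stSwap α k (k + α - 2)) := by
  have h1 := support_stSwap α k (k + α - 1)
  have h2 := support_stSwap α k (k + α - 2)
  have h3 := card_stS α k hα.pos hkα
  have h4 : (stFix α k (k + α - 2)).card = (stFix α k (k + α - 1)).card + 2 := by
    obtain ⟨a, rfl⟩ := hα
    obtain ⟨b, rfl⟩ := hk
    exact card_stFix a b (by omega)
  obtain ⟨d1, s1⟩ := sign_invol (stSwap α k (k + α - 1)) (by ext p <;> rfl)
  obtain ⟨d2, s2⟩ := sign_invol (stSwap α k (k + α - 2)) (by ext p <;> rfl)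
  have : (stSwap α k (k + α - 1)).support.card / 2
    = (stSwap α k (k + α - 2)).support.card / 2 + 1 := by omega
  rw [s1, s2, this, pow_succ]; simp

/-- Incidence matrix. -/
def stN (t s : ℕ × ℕ × ℕ) : ℤ :=
  if t = (s.1 + 1, s.2.1, s.2.2) ∨ t = (s.1, s.2.1 + 1, s.2.2) ∨ t = (s.1, s.2.1, s.2.2 + 1)
  then 1 else 0

def stMat {K : Type*} [Field K] (a b c : K) (t s : ℕ × ℕ × ℕ) : K :=
  (if t = (s.1 + 1, s.2.1, s.2.2) then a else 0) + (if t = (s.1, s.2.1 + 1, s.2.2) then b else 0)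
    + (if t = (s.1, s.2.1, s.2.2 + 1) then c else 0)

theorem stMat_eq {K : Type*} [Field K] (a b c : K) (t s : ℕ × ℕ × ℕ) :
    stMat a b c t s = a ^ (t.1 - s.1) * b ^ (t.2.1 - s.2.1) * c ^ (t.2.2 - s.2.2) * (stN t s : K) := by
  obtain ⟨i, j, l⟩ := s
  unfold stMat stN
  by_cases h1 : t = (i + 1, j, l)
  · subst h1; simp
  by_cases h2 : t = (i, j + 1, l)
  · subst h2; simp
  by_cases h3 : t = (i, j, l + 1)
  · subst h3; simp
  simp [h1, h2, h3]

theorem stN_le {t s : ℕ × ℕ × ℕ} (h : stN t s ≠ 0) : s.1 ≤ t.1 ∧ s.2.1 ≤ t.2.1 ∧ s.2.2 ≤ t.2.2 := by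
  unfold stN at h
  split_ifs at h with h'
  · rcases h' with h' | h' | h' <;> simp [h']
  · simp at h

theorem stN_swap (t s : ℕ × ℕ × ℕ) :
    stN (t.2.1, t.1, t.2.2) (s.2.1, s.1, s.2.2) = stN t s := by
  obtain ⟨i, j, l⟩ := s
  obtain ⟨i', j', l'⟩ := t
  unfold stN
  simp only [Prod.mk.injEq]
  congr 1
  apply propext
  omega

theorem detN_zero (α k : ℕ) (hα : Odd α) (hk : Odd k) (hkα : 2 * α + 1 ≤ k)
    (e : stS α k (k + α - 2) ≃ stS α k (k + α - 1)) :
    (Matrix.of fun s s' : stS α k (k + α - 2) => stN (e s).1 s'.1).det = 0 := by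
  set N := (Matrix.of fun s s' : stS α k (k + α - 2) => stN (e s).1 s'.1) with hN
  set σ := stSwap α k (k + α - 2) with hσ
  set π : Equiv.Perm (stS α k (k + α - 2)) := (e.trans (stSwap α k (k + α - 1))).trans e.symm with hπ
  have h1 : (N.submatrix π id).submatrix id σ = N := by
    ext s s'
    simp only [hN, Matrix.submatrix_apply, Matrix.of_apply, id, hπ, Equiv.trans_apply,
      Equiv.apply_symm_apply]
    exact stN_swap (e s).1 s'.1
  have h2 : Equiv.Perm.sign π = - Equiv.Perm.sign σ := by
    rw [← sign_stSwap α k hα hk hkα, hπ]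
    exact Equiv.Perm.sign_trans_trans_symm _ _
  have h3 : N.det = - N.det := by
    conv_lhs => rw [← h1, Matrix.det_permute', Matrix.det_permute, h2]
    rcases Int.units_eq_one_or (Equiv.Perm.sign σ) with h | h <;> rw [h] <;> simp
  omega

theorem detM_zero {K : Type*} [Field K] (x y z : K)
    (α k : ℕ) (hα : Odd α) (hk : Odd k) (hkα : 2 * α + 1 ≤ k)
    (e : stS α k (k + α - 2) ≃ stS α k (k + α - 1)) :
    (Matrix.of fun s s' : stS α k (k + α - 2) => stMat x y z (e s).1 s'.1).det = 0 := by
  have h0 : ((Matrix.of fun s s' : stS α k (k + α - 2) => stN (e s).1 s'.1).map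
      (Int.castRingHom K)).det = 0 := by
    rw [← RingHom.mapMatrix_apply, ← RingHom.map_det, detN_zero α k hα hk hkα e, map_zero]
  have h1 : ∀ (g : ℕ × ℕ × ℕ → ℕ) (π : Equiv.Perm (stS α k (k + α - 2))),
      (∀ s, g s.1 ≤ g (e (π s)).1) →
      ∑ s, (g (e (π s)).1 - g s.1) = ∑ s, g (e s).1 - ∑ s : stS α k (k + α - 2), g s.1 := by
    intro g π h
    rw [Finset.sum_tsub_distrib _ (fun s _ => h s)]
    congr 1
    exact Equiv.sum_comp π (fun s => g (e s).1)
  have h2 : (Matrix.of fun s s' : stS α k (k + α - 2) => stMat x y z (e s).1 s'.1).det =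
      x ^ (∑ s, (e s).1.1 - ∑ s : stS α k (k + α - 2), s.1.1) *
      y ^ (∑ s, (e s).1.2.1 - ∑ s : stS α k (k + α - 2), s.1.2.1) *
      z ^ (∑ s, (e s).1.2.2 - ∑ s : stS α k (k + α - 2), s.1.2.2) *
      ((Matrix.of fun s s' : stS α k (k + α - 2) => stN (e s).1 s'.1).map
      (Int.castRingHom K)).det := by
    rw [Matrix.det_apply, Matrix.det_apply, Finset.mul_sum]
    refine Finset.sum_congr rfl fun π _ => ?_
    rw [mul_smul_comm]
    congr 1
    by_cases h : ∀ s, stN (e (π s)).1 s.1 ≠ 0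
    · rw [← h1 (fun p => p.1) π (fun s => (stN_le (h s)).1),
        ← h1 (fun p => p.2.1) π (fun s => (stN_le (h s)).2.1),
        ← h1 (fun p => p.2.2) π (fun s => (stN_le (h s)).2.2),
        ← Finset.prod_pow_eq_pow_sum, ← Finset.prod_pow_eq_pow_sum, ← Finset.prod_pow_eq_pow_sum,
        ← Finset.prod_mul_distrib, ← Finset.prod_mul_distrib, ← Finset.prod_mul_distrib]
      refine Finset.prod_congr rfl fun s _ => ?_
      simp [stMat_eq]
    · push Not at h
      obtain ⟨s, hs⟩ := h
      rw [Finset.prod_eq_zero (Finset.mem_univ s), Finset.prod_eq_zero (Finset.mem_univ s), mul_zero]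
      · simp [hs]
      · simp [stMat_eq, hs]
  rw [h2, h0, mul_zero]

def stGood (α k : ℕ) (m : Fin 3 →₀ ℕ) : Prop :=
  m 0 < k ∧ m 1 < k ∧ m 2 < k ∧ (m 0 < α ∨ m 1 < α ∨ m 2 < α)

noncomputable def stExp (p : ℕ × ℕ × ℕ) : Fin 3 →₀ ℕ :=
  Finsupp.equivFunOnFinite.symm ![p.1, p.2.1, p.2.2]

@[simp] theorem stExp_zero (p : ℕ × ℕ × ℕ) : stExp p 0 = p.1 := rfl
@[simp] theorem stExp_one (p : ℕ × ℕ × ℕ) : stExp p 1 = p.2.1 := rfl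
@[simp] theorem stExp_two (p : ℕ × ℕ × ℕ) : stExp p 2 = p.2.2 := rfl

theorem fin3_ext {m n : Fin 3 →₀ ℕ} : m = n ↔ m 0 = n 0 ∧ m 1 = n 1 ∧ m 2 = n 2 := by
  constructor
  · rintro rfl; simp
  · rintro ⟨h0, h1, h2⟩
    ext i; fin_cases i <;> assumption

theorem stExp_coords (m : Fin 3 →₀ ℕ) : stExp (m 0, m 1, m 2) = m := by
  rw [fin3_ext]; simp

theorem stExp_inj {p q : ℕ × ℕ × ℕ} : stExp p = stExp q ↔ p = q := by
  obtain ⟨i, j, l⟩ := p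
  obtain ⟨i', j', l'⟩ := q
  rw [fin3_ext]; simp

theorem fin3_degree (m : Fin 3 →₀ ℕ) : m.degree = m 0 + m 1 + m 2 := by
  rw [Finsupp.degree_eq_sum, Fin.sum_univ_three]

theorem mem_stS_iff {α k e : ℕ} (p : ℕ × ℕ × ℕ) :
    p ∈ stS α k e ↔ stGood α k (stExp p) ∧ (stExp p).degree = e := by
  obtain ⟨i, j, l⟩ := p
  rw [mem_stS, fin3_degree]
  simp only [stGood, stExp_zero, stExp_one, stExp_two]
  omega

theorem mem_stI {K : Type*} [Field K] (α k : ℕ) (f : MvPolynomial (Fin 3) K) :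
    f ∈ (Ideal.span {X 0 ^ k, X 1 ^ k, X 2 ^ k, X 0 ^ α * X 1 ^ α * X 2 ^ α} :
      Ideal (MvPolynomial (Fin 3) K)) ↔ ∀ m, stGood α k m → coeff m f = 0 := by
  have h : ({X 0 ^ k, X 1 ^ k, X 2 ^ k, X 0 ^ α * X 1 ^ α * X 2 ^ α} :
      Set (MvPolynomial (Fin 3) K)) = (fun s => monomial s (1 : K)) ''
      {Finsupp.single 0 k, Finsupp.single 1 k, Finsupp.single 2 k,
        Finsupp.single 0 α + Finsupp.single 1 α + Finsupp.single 2 α} := by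
    simp [Set.image_insert_eq, X_pow_eq_monomial, monomial_mul]
  rw [h, mem_ideal_span_monomial_image]
  have h2 : ∀ m : Fin 3 →₀ ℕ, (∃ si ∈ ({Finsupp.single 0 k, Finsupp.single 1 k, Finsupp.single 2 k,
        Finsupp.single 0 α + Finsupp.single 1 α + Finsupp.single 2 α} : Set (Fin 3 →₀ ℕ)), si ≤ m) ↔
        ¬ stGood α k m := by
    intro m
    simp only [Set.mem_insert_iff, Set.mem_singleton_iff, exists_eq_or_imp, exists_eq_left,
      Finsupp.single_le_iff, Finsupp.le_def, Fin.forall_fin_succ, stGood]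
    simp [Finsupp.single_apply]
    omega
  constructor
  · intro hf m hm
    by_contra h3
    exact (h2 m).1 (hf m (mem_support_iff.2 h3)) hm
  · intro hf m hm
    rw [h2]
    intro h3
    exact mem_support_iff.1 hm (hf m h3)

theorem sum_stS {K : Type*} [Field K] {α k d : ℕ} (f : MvPolynomial (Fin 3) K)
    (hf : f.IsHomogeneous d) (t : Fin 3 →₀ ℕ) (ht : stGood α k t) (i : Fin 3) (a : K) :
    ∑ s : stS α k d, (if t = stExp s.1 + Finsupp.single i 1 then a else 0) * coeff (stExp s.1) f
      = a * coeff t (X i * f) := by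
  rw [coeff_X_mul']
  split_ifs with h
  · have h0 : 1 ≤ t i := Nat.one_le_iff_ne_zero.2 (Finsupp.mem_support_iff.1 h)
    set m := t - Finsupp.single i 1 with hm
    have hmt : t = m + Finsupp.single i 1 := by
      rw [hm, tsub_add_cancel_of_le]; simpa using h0
    by_cases h1 : m.degree = d
    · have hmS : (m 0, m 1, m 2) ∈ stS α k d := by
        rw [mem_stS_iff, stExp_coords]
        refine ⟨?_, h1⟩
        have hle : ∀ j, m j ≤ t j := fun j => by rw [hmt]; simp
        have a0 := hle 0
        have a1 := hle 1
        have a2 := hle 2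
        unfold stGood at *
        omega
      rw [Finset.sum_eq_single ⟨_, hmS⟩]
      · simp only [stExp_coords]; rw [if_pos hmt]
      · intro s _ hs
        rw [if_neg, zero_mul]
        intro h2
        apply hs
        rw [hmt] at h2
        have h3 := add_right_cancel h2
        apply Subtype.ext
        rw [← stExp_inj, ← h3, stExp_coords]
      · simp
    · rw [show coeff m f = 0 from hf.coeff_eq_zero h1, mul_zero]
      apply Finset.sum_eq_zero
      intro s _
      rw [if_neg, zero_mul]
      intro h2
      rw [hmt] at h2
      exact h1 (by rw [add_right_cancel h2]; exact ((mem_stS_iff _).1 s.2).2)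
  · rw [mul_zero]
    apply Finset.sum_eq_zero
    intro s _
    rw [if_neg, zero_mul]
    rintro rfl
    simp at h

theorem coeff_L_mul {K : Type*} [Field K] {α k d : ℕ} (a b c : K) (f : MvPolynomial (Fin 3) K)
    (hf : f.IsHomogeneous d) (t : Fin 3 →₀ ℕ) (ht : stGood α k t) :
    coeff t ((C a * X 0 + C b * X 1 + C c * X 2) * f) =
      ∑ s : stS α k d, stMat a b c (t 0, t 1, t 2) s.1 * coeff (stExp s.1) f := by
  have e0 : ∀ s : ℕ × ℕ × ℕ, (t 0, t 1, t 2) = (s.1 + 1, s.2.1, s.2.2) ↔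
      t = stExp s + Finsupp.single 0 1 := by
    rintro ⟨i, j, l⟩; rw [fin3_ext]; simp
  have e1 : ∀ s : ℕ × ℕ × ℕ, (t 0, t 1, t 2) = (s.1, s.2.1 + 1, s.2.2) ↔
      t = stExp s + Finsupp.single 1 1 := by
    rintro ⟨i, j, l⟩; rw [fin3_ext]; simp
  have e2 : ∀ s : ℕ × ℕ × ℕ, (t 0, t 1, t 2) = (s.1, s.2.1, s.2.2 + 1) ↔
      t = stExp s + Finsupp.single 2 1 := by
    rintro ⟨i, j, l⟩; rw [fin3_ext]; simp
  simp only [stMat, e0, e1, e2, add_mul, Finset.sum_add_distrib, sum_stS f hf t ht]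
  simp only [mul_assoc, coeff_add, coeff_C_mul]

theorem linear_form {K : Type*} [Field K] (L : MvPolynomial (Fin 3) K) (hL : L.IsHomogeneous 1) :
    ∃ a b c : K, L = C a * X 0 + C b * X 1 + C c * X 2 := by
  refine ⟨coeff (Finsupp.single 0 1) L, coeff (Finsupp.single 1 1) L,
    coeff (Finsupp.single 2 1) L, ?_⟩
  ext m
  by_cases hm : m.degree = 1
  · have h : m = Finsupp.single 0 1 ∨ m = Finsupp.single 1 1 ∨ m = Finsupp.single 2 1 := by
      rw [fin3_degree] at hm
      simp only [fin3_ext]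
      simp [Finsupp.single_apply]
      omega
    rcases h with rfl | rfl | rfl <;> simp [coeff_C_mul, coeff_X, Finsupp.single_left_inj]
  · rw [hL.coeff_eq_zero hm]
    have : ∀ i : Fin 3, coeff m (X i : MvPolynomial (Fin 3) K) = 0 := fun i =>
      (isHomogeneous_X K i).coeff_eq_zero hm
    simp [coeff_C_mul, this]

theorem not_wlp {K : Type*} [Field K] (α k : ℕ) (hα : Odd α) (hk : Odd k)
    (hkα : 2 * α + 1 ≤ k) :
    ¬ hasWLP 3 K (Ideal.span {X 0 ^ k, X 1 ^ k, X 2 ^ k, X 0 ^ α * X 1 ^ α * X 2 ^ α}) := by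
  classical
  rintro ⟨L, hL, hr⟩
  obtain ⟨a, b, c, rfl⟩ := linear_form L ((mem_homogeneousSubmodule _ _).1 hL)
  have hpos := hα.pos
  let e : stS α k (k + α - 2) ≃ stS α k (k + α - 1) :=
    Finset.equivOfCardEq (card_stS α k hpos hkα)
  have hdet := detM_zero a b c α k hα hk hkα e
  have hd1 : k + α - 2 + 1 = k + α - 1 := by omega
  rcases hr (k + α - 2) with hinj | hsurj
  · obtain ⟨v, hv0, hv⟩ := Matrix.exists_mulVec_eq_zero_iff.2 hdet
    set f : MvPolynomial (Fin 3) K := ∑ s, monomial (stExp s.1) (v s) with hf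
    have hhom : f.IsHomogeneous (k + α - 2) := by
      apply IsHomogeneous.sum
      intro s _
      exact isHomogeneous_monomial _ ((mem_stS_iff _).1 s.2).2
    have hcoef : ∀ s : stS α k (k + α - 2), coeff (stExp s.1) f = v s := by
      intro s
      rw [hf, coeff_sum, Finset.sum_eq_single s]
      · simp
      · intro s' _ hs
        rw [coeff_monomial, if_neg]
        intro h; exact hs (Subtype.ext (stExp_inj.1 h))
      · simp
    have h1 := hinj (Ideal.Quotient.mk _ f)
      ⟨f, (mem_homogeneousSubmodule _ _).2 hhom, rfl⟩ (by
        rw [← map_mul, Ideal.Quotient.eq_zero_iff_mem, mem_stI]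
        intro m hm
        by_cases hdm : m.degree = k + α - 1
        · rw [coeff_L_mul a b c f hhom m hm]
          have hmS : (m 0, m 1, m 2) ∈ stS α k (k + α - 1) := by
            rw [mem_stS_iff, stExp_coords]; exact ⟨hm, hdm⟩
          have := congrFun hv (e.symm ⟨_, hmS⟩)
          simp only [Matrix.mulVec, dotProduct, Matrix.of_apply, Equiv.apply_symm_apply,
            Pi.zero_apply] at this
          simpa only [hcoef] using this
        · have := (((mem_homogeneousSubmodule _ _).1 hL).mul hhom).coeff_eq_zero (d := m)
            (by omega)
          exact this)
    rw [Ideal.Quotient.eq_zero_iff_mem, mem_stI] at h1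
    apply hv0
    ext s
    rw [← hcoef s]
    exact h1 _ ((mem_stS_iff _).1 s.2).1
  · obtain ⟨w, hw0, hw⟩ := Matrix.exists_vecMul_eq_zero_iff.2 hdet
    obtain ⟨s0, hs0⟩ := Function.ne_iff.1 hw0
    obtain ⟨_, ⟨f, hf, rfl⟩, hfe⟩ := hsurj (Ideal.Quotient.mk _ (monomial (stExp (e s0).1) 1))
      ⟨_, (mem_homogeneousSubmodule _ _).2 (isHomogeneous_monomial _
        (by rw [hd1]; exact ((mem_stS_iff _).1 (e s0).2).2)), rfl⟩
    have hhom : f.IsHomogeneous (k + α - 2) := (mem_homogeneousSubmodule _ _).1 hf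
    change Ideal.Quotient.mk _ _ * Ideal.Quotient.mk _ f = _ at hfe
    rw [← map_mul, Ideal.Quotient.eq, mem_stI] at hfe
    have h1 : ∀ s, coeff (stExp (e s).1) ((C a * X 0 + C b * X 1 + C c * X 2) * f) =
        if s = s0 then 1 else 0 := by
      intro s
      have := hfe _ ((mem_stS_iff _).1 (e s).2).1
      rw [coeff_sub, sub_eq_zero] at this
      rw [this, coeff_monomial]
      simp only [stExp_inj, ← Subtype.ext_iff, e.injective.eq_iff, eq_comm]
    have h2 : ∑ s, w s * coeff (stExp (e s).1) ((C a * X 0 + C b * X 1 + C c * X 2) * f) = w s0 := by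
      simp [h1]
    have h3 : ∀ s, coeff (stExp (e s).1) ((C a * X 0 + C b * X 1 + C c * X 2) * f) =
        Matrix.mulVec (Matrix.of fun s s' : stS α k (k + α - 2) => stMat a b c (e s).1 s'.1)
          (fun s => coeff (stExp s.1) f) s := by
      intro s
      rw [coeff_L_mul a b c f hhom _ ((mem_stS_iff _).1 (e s).2).1]
      rfl
    apply hs0
    rw [← h2]
    simp only [h3]
    change w ⬝ᵥ _ = _
    rw [Matrix.dotProduct_mulVec, hw]
    simp

theorem findim {K : Type*} [Field K] (α k : ℕ) :
    FiniteDimensional K (MvPolynomial (Fin 3) K ⧸ (Ideal.span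
      {X 0 ^ k, X 1 ^ k, X 2 ^ k, X 0 ^ α * X 1 ^ α * X 2 ^ α} :
      Ideal (MvPolynomial (Fin 3) K))) := by
  classical
  set I := (Ideal.span {X 0 ^ k, X 1 ^ k, X 2 ^ k, X 0 ^ α * X 1 ^ α * X 2 ^ α} :
      Ideal (MvPolynomial (Fin 3) K)) with hI
  let T : Finset (MvPolynomial (Fin 3) K ⧸ I) :=
    (Finset.range k ×ˢ Finset.range k ×ˢ Finset.range k).image
      (fun p => Ideal.Quotient.mk I (monomial (stExp p) 1))
  refine ⟨⟨T, ?_⟩⟩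
  rw [eq_top_iff]
  rintro x -
  obtain ⟨f, rfl⟩ := Ideal.Quotient.mk_surjective x
  induction f using MvPolynomial.induction_on' with
  | add p q hp hq => rw [map_add]; exact Submodule.add_mem _ hp hq
  | monomial m c =>
    have h1 : Ideal.Quotient.mk I (monomial m c) = c • Ideal.Quotient.mk I (monomial m 1) := by
      rw [← Ideal.Quotient.mkₐ_eq_mk K, ← map_smul, smul_monomial]; simp
    rw [h1]
    apply Submodule.smul_mem
    by_cases hm : stGood α k m
    · apply Submodule.subset_span
      simp only [T, Finset.coe_image]
      refine ⟨(m 0, m 1, m 2), ?_, by simp only [stExp_coords]⟩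
      have := hm.1
      have := hm.2.1
      have := hm.2.2.1
      simp [*]
    · have : Ideal.Quotient.mk I (monomial m (1 : K)) = 0 := by
        rw [Ideal.Quotient.eq_zero_iff_mem, hI, mem_stI]
        intro n hn
        rw [coeff_monomial, if_neg]
        rintro rfl; exact hm hn
      rw [this]; exact Submodule.zero_mem _

theorem stLevel {K : Type*} [Field K] (α k : ℕ) (h0 : 0 < α) (hkα : 2 * α + 1 ≤ k) :
    socle 3 K (Ideal.span {X 0 ^ k, X 1 ^ k, X 2 ^ k, X 0 ^ α * X 1 ^ α * X 2 ^ α}) ≠ ⊥ ∧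
    socle 3 K (Ideal.span {X 0 ^ k, X 1 ^ k, X 2 ^ k, X 0 ^ α * X 1 ^ α * X 2 ^ α}) ≤
    component 3 K (Ideal.span {X 0 ^ k, X 1 ^ k, X 2 ^ k, X 0 ^ α * X 1 ^ α * X 2 ^ α})
      (2 * k + α - 3) := by
  classical
  constructor
  · rw [Submodule.ne_bot_iff]
    refine ⟨Ideal.Quotient.mk _ (monomial (stExp (k - 1, k - 1, α - 1)) 1), ?_, ?_⟩
    · intro i
      rw [← map_mul, Ideal.Quotient.eq_zero_iff_mem, mem_stI]
      intro m hm
      rw [X, monomial_mul, coeff_monomial, if_neg]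
      rintro rfl
      unfold stGood at hm
      fin_cases i <;> simp [Finsupp.single_apply] at hm <;> omega
    · rw [Ne, Ideal.Quotient.eq_zero_iff_mem, mem_stI]
      intro h
      have := h (stExp (k - 1, k - 1, α - 1)) (by simp [stGood]; omega)
      simp at this
  · intro x hx
    obtain ⟨f, rfl⟩ := Ideal.Quotient.mk_surjective x
    refine ⟨homogeneousComponent (2 * k + α - 3) f,
      (mem_homogeneousSubmodule _ _).2 (homogeneousComponent_isHomogeneous _ _), ?_⟩
    change Ideal.Quotient.mk _ _ = _
    rw [Ideal.Quotient.eq, mem_stI]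
    intro m hm
    rw [coeff_sub, coeff_homogeneousComponent]
    split_ifs with hd
    · simp
    · rw [zero_sub, neg_eq_zero]
      by_contra hc
      have key : ∀ i : Fin 3, ¬ stGood α k (Finsupp.single i 1 + m) := by
        intro i hg
        have h1 := hx i
        rw [← map_mul, Ideal.Quotient.eq_zero_iff_mem, mem_stI] at h1
        have h2 := h1 _ hg
        rw [coeff_X_mul] at h2
        exact hc h2
      have k0 := key 0
      have k1 := key 1
      have k2 := key 2
      rw [fin3_degree] at hd
      unfold stGood at *
      simp [Finsupp.single_apply] at k0 k1 k2
      omega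

/-- For `α` odd, `k` odd with `k ≥ 2α + 1`, the algebra
`K[x,y,z]/(x^k, y^k, z^k, x^α y^α z^α)` is Artinian and level, and it fails the WLP. -/
theorem stmt_19 {K : Type*} [Field K] (α k : ℕ) (hα : Odd α) (hk : Odd k)
    (hkα : 2 * α + 1 ≤ k) :
    letI I : Ideal (MvPolynomial (Fin 3) K) :=
      Ideal.span {X 0 ^ k, X 1 ^ k, X 2 ^ k, X 0 ^ α * X 1 ^ α * X 2 ^ α}
    FiniteDimensional K (MvPolynomial (Fin 3) K ⧸ I) ∧
    (∃ e : ℕ, socle 3 K I ≠ ⊥ ∧ socle 3 K I ≤ component 3 K I e) ∧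
    ¬ hasWLP 3 K I := by
  exact ⟨findim α k, ⟨_, stLevel α k hα.pos hkα⟩, not_wlp α k hα hk hkα⟩
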